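/- arXiv:1503.04277 — 7 statements merged into one kernel-verified Lean document; each statement's English description precedes it below -/
import Mathlib

section
/- Let N, m be positive real numbers, k a positive natural number, and r_d a real number with 1/2 ≤ r_d ≤ 1. Set α = (1 - Real.exp(-(k·N·r_d)/m))^k. Then (1 - Real.exp(-(k·N·((1 - r_d) + (2·r_d - 1)·α))/m))^k ≤ (1 - Real.exp(-(k·N·r_d)/m))^k. -/
/-! The false-positive rate is increasing in the number of stored elements, so it suffices that
`(1 - r_d) + (2 r_d - 1) α ≤ r_d`. This rearranges to `(2 r_d - 1) (1 - α) ≥ 0`, which holds because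
`r_d ≥ 1/2` and `α`, a power of a number in `[0, 1]`, is at most `1`. -/

/-- Lemma 1 key inequality for the Buddy Bloom Filter: with
`α = (1 - e^(-kNr_d/m))^k` the false-positive rate of the remembering part,
holding at most `N(1-r_d) + N(2r_d-1)α` distinct elements, is at most
the false-positive rate of a filter holding `N r_d` distinct elements. -/
theorem bbf_false_positive_bound (N m : ℝ) (hN : 0 < N) (hm : 0 < m)
    (k : ℕ) (hk : 0 < k) (rd : ℝ) (hrd1 : 1 / 2 ≤ rd) (hrd2 : rd ≤ 1) :
    (1 - Real.exp (-((k : ℝ) * N *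
        ((1 - rd) + (2 * rd - 1) * (1 - Real.exp (-((k : ℝ) * N * rd) / m)) ^ k)) / m)) ^ k ≤
      (1 - Real.exp (-((k : ℝ) * N * rd) / m)) ^ k := by
  have hrd : 0 ≤ rd := by linarith
  have hp0 : 0 ≤ 1 - Real.exp (-((k : ℝ) * N * rd) / m) := by
    rw [sub_nonneg, Real.exp_le_one_iff, neg_div, neg_nonpos]
    positivity
  have hp1 : 1 - Real.exp (-((k : ℝ) * N * rd) / m) ≤ 1 :=
    sub_le_self _ (Real.exp_pos _).le
  have hα0 := pow_nonneg hp0 k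
  have hα1 := pow_le_one₀ (n := k) hp0 hp1
  set α := (1 - Real.exp (-((k : ℝ) * N * rd) / m)) ^ k
  have hload : (1 - rd) + (2 * rd - 1) * α ≤ rd := by
    nlinarith [mul_nonneg (show 0 ≤ 2 * rd - 1 by linarith) (sub_nonneg.2 hα1)]
  have hload0 : 0 ≤ (1 - rd) + (2 * rd - 1) * α :=
    add_nonneg (by linarith) (mul_nonneg (by linarith) hα0)
  -- Monotonicity of `x ↦ x ^ k` needs the smaller base to be nonnegative: this uses `hload0`.
  refine pow_le_pow_left₀ ?_ ?_ k
  · rw [sub_nonneg, Real.exp_le_one_iff, neg_div, neg_nonpos]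
    positivity
  · gcongr
end

section
/- Let M, N, m be positive real numbers, k a positive natural number, and r_d a real number with 1/2 ≤ r_d ≤ 1. Set α = (1 - Real.exp(-(k·M·N·r_d)/m))^k. Then (1 - Real.exp(-(k·M·N·((1 - r_d) + (2·r_d - 1)·α))/m))^k ≤ (1 - Real.exp(-(k·M·N·r_d)/m))^k. -/
/-!
The map `t ↦ (1 - e^(-kMNt/m))^k` is monotone on `t ≥ 0`. Since `α ∈ [0, 1]` and `2 r_d - 1 ≥ 0`,
the load `(1 - r_d) + (2 r_d - 1) α` lies between `1 - r_d ≥ 0` and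
`(1 - r_d) + (2 r_d - 1) = r_d`.
-/

/-- Nonnegativity of the load `t` keeps the base `1 - e^(-ct/m)` nonnegative. -/
lemma one_sub_exp_load_nonneg {c t m : ℝ} (hc : 0 ≤ c) (ht : 0 ≤ t) (hm : 0 < m) :
    0 ≤ 1 - Real.exp (-(c * t) / m) := by
  have h : -(c * t) / m ≤ 0 :=
    div_nonpos_of_nonpos_of_nonneg (neg_nonpos.mpr (mul_nonneg hc ht)) hm.le
  linarith [Real.exp_le_one_iff.mpr h]

/-- False-positive bound for the Round-robin Buddy Bloom Filter with `M`
sub-windows, each covering on average `N` elements with distinct ratio `r_d`: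
with `α = (1 - e^(-kMNr_d/m))^k`, the resulting false-positive rate is at most
`(1 - e^(-kMNr_d/m))^k`. -/
theorem rbbf_false_positive_bound (M N m : ℝ) (hM : 0 < M) (hN : 0 < N) (hm : 0 < m)
    (k : ℕ) (hk : 0 < k) (rd : ℝ) (hrd1 : 1 / 2 ≤ rd) (hrd2 : rd ≤ 1) :
    (1 - Real.exp (-((k : ℝ) * M * N *
        ((1 - rd) + (2 * rd - 1) * (1 - Real.exp (-((k : ℝ) * M * N * rd) / m)) ^ k)) / m)) ^ k ≤
      (1 - Real.exp (-((k : ℝ) * M * N * rd) / m)) ^ k := by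
  have hc : 0 ≤ (k : ℝ) * M * N := by positivity
  have hbase := one_sub_exp_load_nonneg hc (by linarith : 0 ≤ rd) hm
  have hα0 := pow_nonneg hbase k
  have hα1 : (1 - Real.exp (-((k : ℝ) * M * N * rd) / m)) ^ k ≤ 1 :=
    pow_le_one₀ hbase (by linarith [Real.exp_pos (-((k : ℝ) * M * N * rd) / m)])
  -- Generalizing only `α` inside the load leaves the right-hand side intact.
  have key : ∀ α : ℝ, 0 ≤ α → α ≤ 1 →
      (1 - Real.exp (-((k : ℝ) * M * N * ((1 - rd) + (2 * rd - 1) * α)) / m)) ^ k ≤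
        (1 - Real.exp (-((k : ℝ) * M * N * rd) / m)) ^ k := by
    intro α h0 h1
    have hx0 : 0 ≤ (1 - rd) + (2 * rd - 1) * α :=
      add_nonneg (by linarith) (mul_nonneg (by linarith) h0)
    have hx1 : (1 - rd) + (2 * rd - 1) * α ≤ rd := by nlinarith
    refine pow_le_pow_left₀ (one_sub_exp_load_nonneg hc hx0 hm) ?_ k
    gcongr
  exact key _ hα0 hα1
end

section
/- Let m and n be positive real numbers and let k₀ = (m/n)·Real.log 2. Then for every real k > 0, (1 - Real.exp(-k·n/m))^k ≥ (1/2)^((m/n)·Real.log 2), and equality holds at k = k₀, i.e., (1 - Real.exp(-k₀·n/m))^(k₀) = (1/2)^((m/n)·Real.log 2). -/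
/-!
Put `p = e^(-kn/m) ∈ (0, 1)`, so that `k = -(m/n) log p`. Taking logarithms, the inequality becomes
`log p * log (1 - p) ≤ (log 2)^2`, with equality at `p = 1/2`, which corresponds to `k = k₀`.
The left side is symmetric under `p ↦ 1 - p`, so it is enough to show that it increases on
`(0, 1/2]`. Its derivative `log (1 - p) / p - log p / (1 - p)` is the slope of `log` between
`p` and `1` minus the slope between `1 - p` and `1`, which is nonnegative because `log` is concave
and `p ≤ 1 - p`.
-/

/-- Comparison of the slopes of `log` from `p` to `1` and from `1 - p` to `1`, with
denominators cleared. -/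
lemma mul_log_le_one_sub_mul_log {p : ℝ} (hp : 0 < p) (hp2 : p ≤ 1 / 2) :
    p * Real.log p ≤ (1 - p) * Real.log (1 - p) := by
  have hq : 0 < 1 - p := by linarith
  -- `1 - p` is the convex combination of `p` and `1` with weight `p / (1 - p)` on `p`.
  have h := strictConcaveOn_log_Ioi.concaveOn.2 (Set.mem_Ioi.2 hp)
    (Set.mem_Ioi.2 (one_pos : (0 : ℝ) < 1))
    (show 0 ≤ p / (1 - p) by positivity)
    (show 0 ≤ (1 - 2 * p) / (1 - p) from div_nonneg (by linarith) hq.le)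
    (by field_simp; ring)
  have e : (p / (1 - p)) • p + ((1 - 2 * p) / (1 - p)) • (1 : ℝ) = 1 - p := by
    simp only [smul_eq_mul]
    field_simp
    ring
  rw [e] at h
  simp only [smul_eq_mul, Real.log_one, mul_zero, add_zero] at h
  rw [div_mul_eq_mul_div, div_le_iff₀ hq] at h
  linarith

lemma monotoneOn_log_mul_log_one_sub :
    MonotoneOn (fun p : ℝ => Real.log p * Real.log (1 - p)) (Set.Ioc 0 (1 / 2)) := by
  have hd : ∀ p : ℝ, 0 < p → p ≤ 1 / 2 →
      HasDerivAt (fun p : ℝ => Real.log p * Real.log (1 - p))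
        (p⁻¹ * Real.log (1 - p) + Real.log p * (-1 / (1 - p))) p := by
    intro p hp hp2
    have hq : (1 - p) ≠ 0 := by linarith
    exact (Real.hasDerivAt_log hp.ne').mul (((hasDerivAt_id p).const_sub 1).log hq)
  refine monotoneOn_of_deriv_nonneg (convex_Ioc _ _)
    (fun p hp => (hd p hp.1 hp.2).continuousAt.continuousWithinAt) ?_ ?_
  · intro p hp
    rw [interior_Ioc] at hp
    exact (hd p hp.1 hp.2.le).differentiableAt.differentiableWithinAt
  · intro p hp
    rw [interior_Ioc] at hp
    have hp0 : 0 < p := hp.1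
    have hq : 0 < 1 - p := by linarith [hp.2]
    rw [(hd p hp.1 hp.2.le).deriv]
    have e : p⁻¹ * Real.log (1 - p) + Real.log p * (-1 / (1 - p))
        = ((1 - p) * Real.log (1 - p) - p * Real.log p) / (p * (1 - p)) := by
      field_simp
      ring
    rw [e]
    exact div_nonneg (sub_nonneg.2 (mul_log_le_one_sub_mul_log hp0 hp.2.le)) (by positivity)

lemma log_mul_log_one_sub_le {p : ℝ} (hp : 0 < p) (hp1 : p < 1) :
    Real.log p * Real.log (1 - p) ≤ Real.log 2 ^ 2 := by
  have key : ∀ q : ℝ, 0 < q → q ≤ 1 / 2 →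
      Real.log q * Real.log (1 - q) ≤ Real.log 2 ^ 2 := by
    intro q hq hq2
    have h := monotoneOn_log_mul_log_one_sub ⟨hq, hq2⟩ ⟨by norm_num, le_refl _⟩ hq2
    have e : (1 : ℝ) - 2⁻¹ = 2⁻¹ := by norm_num
    simp only [one_div, e, Real.log_inv] at h
    linarith
  rcases le_total p (1 / 2) with h | h
  · exact key p hp h
  · have := key (1 - p) (by linarith) (by linarith)
    rw [sub_sub_cancel] at this
    linarith

/-- The approximate false-positive rate `k ↦ (1 - e^(-k n / m))^k` (real `k > 0`)
attains its global minimum `(1/2)^((m/n) ln 2)` at `k₀ = (m/n) ln 2`. -/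
theorem bloom_fp_min_at_kopt (m n : ℝ) (hm : 0 < m) (hn : 0 < n)
    (k₀ : ℝ) (hk₀ : k₀ = (m / n) * Real.log 2) :
    (∀ k : ℝ, 0 < k →
        (1 - Real.exp (-(k * n) / m)) ^ k ≥ ((1 : ℝ) / 2) ^ ((m / n) * Real.log 2)) ∧
      (1 - Real.exp (-(k₀ * n) / m)) ^ k₀ = ((1 : ℝ) / 2) ^ ((m / n) * Real.log 2) := by
  constructor
  · intro k hk
    have hp1 : Real.exp (-(k * n) / m) < 1 := by
      rw [Real.exp_lt_one_iff, neg_div]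
      exact neg_neg_of_pos (by positivity)
    have h := log_mul_log_one_sub_le (Real.exp_pos _) hp1
    rw [Real.log_exp] at h
    rw [ge_iff_le, Real.rpow_def_of_pos (by norm_num), Real.rpow_def_of_pos (by linarith),
      Real.exp_le_exp, one_div, Real.log_inv]
    have h' := mul_le_mul_of_nonneg_left h (div_pos hm hn).le
    have e : m / n * (-(k * n) / m * Real.log (1 - Real.exp (-(k * n) / m)))
        = -(Real.log (1 - Real.exp (-(k * n) / m)) * k) := by
      field_simp
    rw [e] at h'
    linarith
  · have e : -(k₀ * n) / m = -Real.log 2 := by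
      rw [hk₀]
      field_simp
    rw [e, Real.exp_neg, Real.exp_log (by norm_num), hk₀]
    norm_num
end

section
/- Let ε be a real number with 0 < ε < 1, let n be a positive natural number, let k = ⌈Real.logb 2 (1/ε)⌉ (the natural-number ceiling), and let m be a real number with m ≥ n·k / Real.log 2. Then (1 - Real.exp(-(k·n)/m))^k ≤ ε. -/
/-!
The bound on `m` says exactly that `k * n / m ≤ log 2`, so the base `1 - exp (-(k * n) / m)` lies
in `[0, 1/2]`. Its `k`-th power is therefore at most `2⁻ᵏ`, and `2⁻ᵏ ≤ ε` because
`k ≥ log₂ (1 / ε)`.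
-/

/-- Optimal parameter selection: with `k = ⌈log₂(1/ε)⌉` hash functions and
`m ≥ n·k/ln 2` bits, the approximate false-positive rate is at most `ε`. -/
theorem bloom_fp_params_le (ε : ℝ) (hε0 : 0 < ε) (hε1 : ε < 1)
    (n : ℕ) (hn : 0 < n) (k : ℕ) (hk : k = ⌈Real.logb 2 (1 / ε)⌉₊)
    (m : ℝ) (hm : m ≥ (n : ℝ) * k / Real.log 2) :
    (1 - Real.exp (-((k : ℝ) * n) / m)) ^ k ≤ ε := by
  have hlog : 0 < Real.log 2 := Real.log_pos one_lt_two
  have hkε : Real.logb 2 (1 / ε) ≤ k := hk ▸ Nat.le_ceil _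
  -- `ε < 1` forces `k > 0`, hence `m > 0`.
  have hk0 : (0 : ℝ) < k :=
    (Real.logb_pos one_lt_two ((one_lt_div hε0).2 hε1)).trans_le hkε
  have hn0 : (0 : ℝ) < n := Nat.cast_pos.2 hn
  have hm0 : 0 < m := lt_of_lt_of_le (by positivity) hm
  have hx : (k : ℝ) * n / m ≤ Real.log 2 := by
    rw [ge_iff_le, div_le_iff₀ hlog] at hm
    rw [div_le_iff₀ hm0]
    linarith
  have hx0 : 0 ≤ (k : ℝ) * n / m := by positivity
  have hhalf : (1 / 2 : ℝ) ≤ Real.exp (-((k : ℝ) * n) / m) := by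
    have h2 : Real.exp (-Real.log 2) = 1 / 2 := by
      rw [Real.exp_neg, Real.exp_log two_pos, one_div]
    rw [← h2, neg_div]
    exact Real.exp_le_exp.2 (neg_le_neg hx)
  have hone : Real.exp (-((k : ℝ) * n) / m) ≤ 1 := by
    rw [neg_div]
    exact Real.exp_le_one_iff.2 (neg_nonpos.2 hx0)
  have hpow : 1 / ε ≤ (2 : ℝ) ^ k := by
    rwa [Real.logb_le_iff_le_rpow one_lt_two (by positivity), Real.rpow_natCast] at hkε
  calc (1 - Real.exp (-((k : ℝ) * n) / m)) ^ k
      ≤ (1 / 2) ^ k := pow_le_pow_left₀ (by linarith) (by linarith) k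
    _ = 1 / 2 ^ k := one_div_pow 2 k
    _ ≤ ε := (one_div_le (by positivity) hε0).2 hpow
end

section
/- Let U be a type with decidable equality. Define step : Finset U × Finset U → U → Finset U × Finset U by step (s₁, s₂) x = if x ∈ s₁ then (s₁, insert x s₂) else (insert x s₁, s₂). Then for every list l : List U, the second component of l.foldl step (∅, ∅) equals l.toFinset.filter (fun x => 2 ≤ l.count x). -/
/-!
The remembering part alone does not determine how the next element is treated, so the induction
has to track both parts at once: `bbf_fold_invariant` characterizes each by a lower bound on the
number of occurrences. The induction appends elements at the end of the stream, since the left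
fold processes the last element last. Only the count of the appended element changes, and it
enters the remembering part exactly when its count was already positive.
-/

/-- The selecting part holds the elements seen at least once, the remembering part those seen at
least twice. The first clause, applied to the incoming element rather than to `y`, decides which
branch of the update is taken. -/
theorem bbf_fold_invariant {U : Type*} [DecidableEq U] (l : List U) (y : U) :
    (y ∈ (l.foldl
        (fun (p : Finset U × Finset U) (x : U) =>
          if x ∈ p.1 then (p.1, insert x p.2) else (insert x p.1, p.2))
        (∅, ∅)).1 ↔ 1 ≤ l.count y) ∧
    (y ∈ (l.foldl
        (fun (p : Finset U × Finset U) (x : U) =>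
          if x ∈ p.1 then (p.1, insert x p.2) else (insert x p.1, p.2))
        (∅, ∅)).2 ↔ 2 ≤ l.count y) := by
  induction l using List.reverseRecOn generalizing y with
  | nil => simp
  | append_singleton l a ih =>
    rw [List.foldl_append, List.count_append, List.count_singleton]
    generalize List.foldl _ _ l = p at ih ⊢
    simp only [List.foldl_cons, List.foldl_nil]
    by_cases hay : a = y
    · subst hay
      rw [if_pos (beq_self_eq_true a)]
      split_ifs with h <;> rw [(ih a).1] at h
      · rw [Finset.mem_insert, (ih a).1]
        exact ⟨by omega, by simp only [true_or, true_iff]; omega⟩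
      · rw [Finset.mem_insert, (ih a).2]
        exact ⟨by simp only [true_or, true_iff]; omega, by omega⟩
    · split_ifs <;> simp_all [Ne.symm hay]

/-- In the idealized (collision-free) Buddy Bloom Filter, the remembering part
`B2` ends up holding exactly the duplicate elements of the stream, i.e. those
occurring at least twice. -/
theorem bbf_ideal_remembering_part (U : Type*) [DecidableEq U] (l : List U) :
    (l.foldl
        (fun (p : Finset U × Finset U) (x : U) =>
          if x ∈ p.1 then (p.1, insert x p.2) else (insert x p.1, p.2))
        (∅, ∅)).2 = l.toFinset.filter (fun x => 2 ≤ l.count x) := by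
  ext y
  rw [(bbf_fold_invariant l y).2, Finset.mem_filter, List.mem_toFinset]
  exact ⟨fun h => ⟨List.count_pos_iff.mp (by omega), h⟩, And.right⟩
end

section
/- Let U be a type, let k and m be positive natural numbers, and let h : Fin k → U → Fin m be hash functions. For a bit array b : Fin m → Bool, define query b x := ∀ i : Fin k, b (h i x) = true, and setBits b x := fun j => b j || decide (∃ i : Fin k, h i x = j). Define step (p : (Fin m → Bool) × (Fin m → Bool)) (x : U) := if query p.2 x then p else if query p.1 x then (p.1, setBits p.2 x) else (setBits p.1 x, p.2). Then for every list l : List U with decidable equality on U, writing (b₁, b₂) = l.foldl step (fun _ => false, fun _ => false), every element x with 2 ≤ l.count x satisfies query b₂ x. -/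
/-!
Bits are only ever set, so a query that succeeds on either part keeps succeeding. Reading `x` makes
it pass the query on `B1` or on `B2`, and reading `x` when it already passes on `B1` makes it pass on
`B2`, so two readings suffice. Collisions can only make a query succeed earlier. The induction over
the stream (`bbfQuery_foldl_snd`) starts from an arbitrary state, with one reading of `x` still needed
if `x` passes on `B1`, two if it passes on neither part, and none if it passes on `B2`.
-/

/-- Membership query on a bit array: all `k` hashed bits of `x` are set. -/
def bbfQuery {U : Type*} {k m : ℕ} (h : Fin k → U → Fin m)
    (b : Fin m → Bool) (x : U) : Prop :=
  ∀ i : Fin k, b (h i x) = true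

instance {U : Type*} {k m : ℕ} (h : Fin k → U → Fin m) (b : Fin m → Bool) (x : U) :
    Decidable (bbfQuery h b x) :=
  inferInstanceAs (Decidable (∀ i : Fin k, b (h i x) = true))

/-- Setting the `k` hashed bits of `x` in a bit array. -/
def bbfSetBits {U : Type*} {k m : ℕ} (h : Fin k → U → Fin m)
    (b : Fin m → Bool) (x : U) : Fin m → Bool :=
  fun j => b j || decide (∃ i : Fin k, h i x = j)

/-- One step of the Buddy Bloom Filter insertion algorithm: query the
remembering part `B2` first (skip if present); otherwise query the selecting
part `B1` and set the bits of `x` in `B2` if present there, else in `B1`. -/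
def bbfStep {U : Type*} {k m : ℕ} (h : Fin k → U → Fin m)
    (p : (Fin m → Bool) × (Fin m → Bool)) (x : U) : (Fin m → Bool) × (Fin m → Bool) :=
  if bbfQuery h p.2 x then p
  else if bbfQuery h p.1 x then (p.1, bbfSetBits h p.2 x)
  else (bbfSetBits h p.1 x, p.2)

theorem bbfQuery_setBits_self {U : Type*} {k m : ℕ} (h : Fin k → U → Fin m)
    (b : Fin m → Bool) (x : U) : bbfQuery h (bbfSetBits h b x) x := by
  intro i
  simp [bbfSetBits]

theorem bbfQuery_setBits_of_query {U : Type*} {k m : ℕ} (h : Fin k → U → Fin m)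
    (b : Fin m → Bool) (x y : U) (hb : bbfQuery h b x) : bbfQuery h (bbfSetBits h b y) x := by
  intro i
  simp [bbfSetBits, hb i]

theorem bbfQuery_step_fst {U : Type*} {k m : ℕ} (h : Fin k → U → Fin m)
    (p : (Fin m → Bool) × (Fin m → Bool)) (x y : U) (hp : bbfQuery h p.1 x) :
    bbfQuery h (bbfStep h p y).1 x := by
  unfold bbfStep
  split_ifs
  exacts [hp, hp, bbfQuery_setBits_of_query h _ x y hp]

theorem bbfQuery_step_snd {U : Type*} {k m : ℕ} (h : Fin k → U → Fin m)
    (p : (Fin m → Bool) × (Fin m → Bool)) (x y : U) (hp : bbfQuery h p.2 x) :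
    bbfQuery h (bbfStep h p y).2 x := by
  unfold bbfStep
  split_ifs
  exacts [hp, bbfQuery_setBits_of_query h _ x y hp, hp]

theorem bbfQuery_step_self {U : Type*} {k m : ℕ} (h : Fin k → U → Fin m)
    (p : (Fin m → Bool) × (Fin m → Bool)) (x : U) :
    bbfQuery h (bbfStep h p x).2 x ∨ bbfQuery h (bbfStep h p x).1 x := by
  unfold bbfStep
  split_ifs with h2 h1
  exacts [.inl h2, .inr h1, .inr (bbfQuery_setBits_self h _ x)]

theorem bbfQuery_step_self_snd {U : Type*} {k m : ℕ} (h : Fin k → U → Fin m)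
    (p : (Fin m → Bool) × (Fin m → Bool)) (x : U) (hp : bbfQuery h p.1 x) :
    bbfQuery h (bbfStep h p x).2 x := by
  unfold bbfStep
  split_ifs with h2
  exacts [h2, bbfQuery_setBits_self h _ x]

/-- The invariant of the insertion loop: from any state, `x` ends up in the remembering part as soon
as the rest of the stream contains the occurrences of `x` that the state still needs. -/
theorem bbfQuery_foldl_snd {U : Type*} [DecidableEq U] {k m : ℕ} (h : Fin k → U → Fin m)
    (x : U) (l : List U) (p : (Fin m → Bool) × (Fin m → Bool))
    (hp : bbfQuery h p.2 x ∨ (bbfQuery h p.1 x ∧ 1 ≤ l.count x) ∨ 2 ≤ l.count x) :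
    bbfQuery h (l.foldl (bbfStep h) p).2 x := by
  induction l generalizing p with
  | nil => simpa using hp
  | cons y l ih =>
    rw [List.foldl_cons]
    apply ih
    by_cases hy : y = x
    · subst hy
      rw [List.count_cons_self] at hp
      rcases hp with h2 | ⟨h1, -⟩ | hc
      · exact .inl (bbfQuery_step_snd h p y y h2)
      · exact .inl (bbfQuery_step_self_snd h p y h1)
      · exact (bbfQuery_step_self h p y).imp_right fun h1 => .inl ⟨h1, by lia⟩
    · rw [List.count_cons_of_ne hy] at hp
      exact hp.imp (bbfQuery_step_snd h p x y)
        (.imp_left (.imp_left (bbfQuery_step_fst h p x y)))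


/-- A Buddy Bloom Filter has no false negatives: every element occurring at
least twice in the stream passes the membership query on the final
remembering part `B2`, even in the presence of hash collisions. -/
theorem bbf_no_false_negative (U : Type*) [DecidableEq U] (k m : ℕ)
    (hk : 0 < k) (hm : 0 < m) (h : Fin k → U → Fin m)
    (l : List U) (x : U) (hx : 2 ≤ l.count x) :
    bbfQuery h (l.foldl (bbfStep h) (fun _ => false, fun _ => false)).2 x := by
  exact bbfQuery_foldl_snd h x l _ (.inr (.inr hx))
end

section
/- Let U be a type with decidable equality, let S₁ S₂ : Finset U, let k and m be positive natural numbers, and fix a position j : Fin m. Under the uniform probability distribution on the set of all functions f : (↑(S₁ ∪ S₂) × Fin k) → Fin m (modeling k independent, perfectly random hash values for each element of S₁ ∪ S₂), the probability that both events hold — (∃ x ∈ S₁, ∃ i : Fin k, f (x, i) = j) and (∃ x ∈ S₂, ∃ i : Fin k, f (x, i) = j) — equals 1 - q^(k·S₁.card) - q^(k·S₂.card) + q^(k·(S₁.card + S₂.card - (S₁ ∩ S₂).card)), where q = ((m : ℝ) - 1)/m. -/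
/-!
A bit `j` stays unset in the filter of a set of keys exactly when none of the corresponding hash
values equals `j`. For a finite set `T` of coordinates, the assignments avoiding `j` on `T` form a
product of finsets, so this event has probability `q ^ #T` with `q = (m - 1) / m`
(`card_avoid_div`). Avoiding `j` on `T₁` and on `T₂` is the same as avoiding it on `T₁ ∪ T₂`, so
inclusion–exclusion on the complements gives the probability of hitting `j` on both
(`card_hit_both_div`). The theorem is the case `Tᵢ = Sᵢ × Fin k`, where `#Tᵢ = k * #Sᵢ` and
`T₁ ∪ T₂` is the set of all coordinates.
-/

/-- The assignments `f : A → Fin m` that never take the value `j` on `T`. -/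
def avoid {A : Type*} [Fintype A] [DecidableEq A] {m : ℕ} (j : Fin m) (T : Finset A) :
    Finset (A → Fin m) :=
  Finset.univ.filter fun f => ∀ a ∈ T, f a ≠ j

theorem card_avoid_div {A : Type*} [Fintype A] [DecidableEq A] {m : ℕ} (hm : 0 < m)
    (j : Fin m) (T : Finset A) :
    ((avoid j T).card : ℝ) / (m : ℝ) ^ Fintype.card A = (((m : ℝ) - 1) / m) ^ T.card := by
  have hm0 : (m : ℝ) ≠ 0 := by exact_mod_cast hm.ne'
  have h : avoid j T =
      Fintype.piFinset fun a => if a ∈ T then Finset.univ.erase j else Finset.univ := by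
    ext f
    simp only [avoid, Finset.mem_filter, Finset.mem_univ, true_and, Fintype.mem_piFinset]
    refine forall_congr' fun a => ?_
    by_cases ha : a ∈ T <;> simp [ha]
  have hpow : (m : ℝ) ^ Fintype.card A = ∏ _a : A, (m : ℝ) := by simp
  rw [h, Fintype.card_piFinset, Nat.cast_prod, hpow, ← Finset.prod_div_distrib]
  have hfac : ∀ a : A,
      (((if a ∈ T then Finset.univ.erase j else Finset.univ : Finset (Fin m)).card : ℕ) : ℝ) / m
        = if a ∈ T then ((m : ℝ) - 1) / m else 1 := by
    intro a
    by_cases ha : a ∈ T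
    · simp [ha, Nat.cast_sub (Nat.succ_le_of_lt hm)]
    · simp [ha, hm0]
  simp_rw [hfac]
  simp [div_pow]

theorem card_hit_both_div {A : Type*} [Fintype A] [DecidableEq A] {m : ℕ} (hm : 0 < m)
    (j : Fin m) (T₁ T₂ : Finset A) :
    (((avoid j T₁ ∪ avoid j T₂)ᶜ.card : ℕ) : ℝ) / (m : ℝ) ^ Fintype.card A =
      1 - (((m : ℝ) - 1) / m) ^ T₁.card - (((m : ℝ) - 1) / m) ^ T₂.card
        + (((m : ℝ) - 1) / m) ^ (T₁ ∪ T₂).card := by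
  have hm0 : (m : ℝ) ^ Fintype.card A ≠ 0 := pow_ne_zero _ (by exact_mod_cast hm.ne')
  have hinter : avoid j T₁ ∩ avoid j T₂ = avoid j (T₁ ∪ T₂) := by
    ext f
    simp [avoid, or_imp, forall_and]
  have h₁ := Finset.card_union_add_card_inter (avoid j T₁) (avoid j T₂)
  have h₂ := Finset.card_add_card_compl (avoid j T₁ ∪ avoid j T₂)
  rw [hinter] at h₁
  rw [Fintype.card_fun, Fintype.card_fin] at h₂
  have h₁' : ((avoid j T₁ ∪ avoid j T₂).card : ℝ) + (avoid j (T₁ ∪ T₂)).card =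
      (avoid j T₁).card + (avoid j T₂).card := by exact_mod_cast h₁
  have h₂' : ((avoid j T₁ ∪ avoid j T₂).card : ℝ) + ((avoid j T₁ ∪ avoid j T₂)ᶜ.card : ℕ) =
      (m : ℝ) ^ Fintype.card A := by exact_mod_cast h₂
  rw [← card_avoid_div hm j T₁, ← card_avoid_div hm j T₂, ← card_avoid_div hm j (T₁ ∪ T₂)]
  field_simp
  linarith

open Classical in
/-- For two Bloom filters on the same `m`-bit array with the same `k` perfectly
random hash functions, representing `S₁` and `S₂`, the probability (under the
uniform distribution on hash assignments `f : ↑(S₁ ∪ S₂) × Fin k → Fin m`)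
that a fixed bit `j` is set in both filters equals
`1 - q^(k|S₁|) - q^(k|S₂|) + q^(k(|S₁|+|S₂|-|S₁∩S₂|))` with `q = (m-1)/m`. -/
theorem bloom_both_bits_set_prob (U : Type*) [DecidableEq U] (S₁ S₂ : Finset U)
    (k m : ℕ) (hk : 0 < k) (hm : 0 < m) (j : Fin m) :
    ((Finset.univ.filter fun f : ((S₁ ∪ S₂ : Finset U) : Type _) × Fin k → Fin m =>
        (∃ x, ∃ hx : x ∈ S₁, ∃ i : Fin k,
          f (⟨x, Finset.mem_union_left _ hx⟩, i) = j) ∧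
        (∃ x, ∃ hx : x ∈ S₂, ∃ i : Fin k,
          f (⟨x, Finset.mem_union_right _ hx⟩, i) = j)).card : ℝ) /
      (Fintype.card (((S₁ ∪ S₂ : Finset U) : Type _) × Fin k → Fin m) : ℝ) =
    1 - (((m : ℝ) - 1) / m) ^ (k * S₁.card) - (((m : ℝ) - 1) / m) ^ (k * S₂.card)
      + (((m : ℝ) - 1) / m) ^ (k * (S₁.card + S₂.card - (S₁ ∩ S₂).card)) := by
  -- The coordinates carrying the hash values of the elements of `S`.
  let T : Finset U → Finset (((S₁ ∪ S₂ : Finset U) : Type _) × Fin k) := fun S =>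
    (S.subtype (· ∈ S₁ ∪ S₂)) ×ˢ Finset.univ
  have hT : ∀ S, S ⊆ S₁ ∪ S₂ → (T S).card = k * S.card := by
    intro S hS
    simp only [T, Finset.card_product, Finset.card_subtype, Finset.card_univ, Fintype.card_fin]
    rw [Finset.filter_true_of_mem fun x hx => hS hx, mul_comm]
  have hunion : T S₁ ∪ T S₂ = T (S₁ ∪ S₂) := by
    ext p
    simpa [T] using Finset.mem_union.mp p.1.2
  have key := card_hit_both_div hm j (T S₁) (T S₂)
  rw [hunion, hT _ Finset.subset_union_left, hT _ Finset.subset_union_right,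
    hT _ subset_rfl, Finset.card_union] at key
  rw [← key, Fintype.card_fun, Fintype.card_fin, Nat.cast_pow]
  congr 3
  ext f
  simp only [avoid, T, Finset.mem_filter, Finset.mem_univ, true_and, Finset.mem_compl,
    Finset.mem_union, not_or, not_forall, Finset.mem_product, Finset.mem_subtype, and_true,
    ne_eq, not_not, Prod.exists, Subtype.exists, exists_prop]
  constructor
  · rintro ⟨⟨x, hx, i, hi⟩, y, hy, l, hl⟩
    exact ⟨⟨x, Or.inl hx, i, hx, hi⟩, y, Or.inr hy, l, hy, hl⟩
  · rintro ⟨⟨x, _, i, hx, hi⟩, y, _, l, hy, hl⟩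
    exact ⟨⟨x, hx, i, hi⟩, y, hy, l, hl⟩
end
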